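/- Let X ~ N(0, Σ) and Y ~ N(0, S) be independent Gaussian vectors in ℝ^d with positive semidefinite covariance matrices Σ and S. Then for all 0 ≤ t < (‖S‖_op ‖Σ‖_op)^{-1/2}, log E[exp(t⟨X, Y⟩)] ≤ t² Tr(SΣ) / (2(1 - t√(‖S‖_op ‖Σ‖_op))). -/

import Mathlib

open MeasureTheory ProbabilityTheory

/-- Operator (spectral) norm of a real matrix acting on Euclidean space. -/
noncomputable def opNorm {d : ℕ} (A : Matrix (Fin d) (Fin d) ℝ) : ℝ :=
  ‖Matrix.toEuclideanCLM (𝕜 := ℝ) A‖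

/-- The quadratic form `u ↦ ⟨u, A u⟩` on Euclidean space. -/
noncomputable def quadForm {d : ℕ} (A : Matrix (Fin d) (Fin d) ℝ)
    (u : EuclideanSpace ℝ (Fin d)) : ℝ :=
  @inner ℝ _ _ u (Matrix.toEuclideanCLM (𝕜 := ℝ) A u)

/-- A measure on `ℝ^d` is Gaussian with mean `m` and covariance `S` if every
one-dimensional linear marginal is the corresponding real Gaussian. -/
def IsGaussianVec {d : ℕ} (μ : Measure (EuclideanSpace ℝ (Fin d)))
    (m : EuclideanSpace ℝ (Fin d)) (S : Matrix (Fin d) (Fin d) ℝ) : Prop :=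
  IsProbabilityMeasure μ ∧
    ∀ u : EuclideanSpace ℝ (Fin d),
      μ.map (fun x => @inner ℝ _ _ u x) =
        gaussianReal (@inner ℝ _ _ u m) (Real.toNNReal (quadForm S u))

lemma Matrix.PosSemidef.quadForm_nonneg {d : ℕ} {A : Matrix (Fin d) (Fin d) ℝ}
    (hA : A.PosSemidef) (u : EuclideanSpace ℝ (Fin d)) : 0 ≤ quadForm A u := by
  rw [quadForm, Matrix.inner_toEuclideanCLM]
  simpa using hA.dotProduct_mulVec_nonneg u.ofLp

/-- A centered Gaussian vector in the sense of one-dimensional marginals has the law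
`multivariateGaussian 0 A`. -/
lemma IsGaussianVec.eq_multivariateGaussian {d : ℕ} {μ : Measure (EuclideanSpace ℝ (Fin d))}
    {A : Matrix (Fin d) (Fin d) ℝ} (hA : A.PosSemidef) (h : IsGaussianVec μ 0 A) :
    μ = multivariateGaussian 0 A := by
  obtain ⟨hμ, h⟩ := h
  refine Measure.ext_of_charFun (E := EuclideanSpace ℝ (Fin d)) ?_
  ext u
  have hq : 0 ≤ quadForm A u := hA.quadForm_nonneg u
  have key : charFun μ u = charFun (μ.map (fun x => @inner ℝ _ _ u x)) 1 := by
    rw [charFun_apply, charFun_apply_real, integral_map (by fun_prop) (by fun_prop)]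
    simp [real_inner_comm]
  rw [key, h u, charFun_gaussianReal, charFun_multivariateGaussian hA, ← Matrix.inner_toEuclideanCLM]
  simp only [Real.coe_toNNReal _ hq]
  simp [quadForm]

/-- The Laplace transform of a linear functional of a centered Gaussian vector. -/
lemma IsGaussianVec.lintegral_exp_inner {d : ℕ} {ν : Measure (EuclideanSpace ℝ (Fin d))}
    {A : Matrix (Fin d) (Fin d) ℝ} (hA : A.PosSemidef) (h : IsGaussianVec ν 0 A)
    (t : ℝ) (x : EuclideanSpace ℝ (Fin d)) :
    ∫⁻ y, ENNReal.ofReal (Real.exp (t * @inner ℝ _ _ x y)) ∂ν =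
      ENNReal.ofReal (Real.exp (t ^ 2 / 2 * quadForm A x)) := by
  obtain ⟨hν, h⟩ := h
  have hq : 0 ≤ quadForm A x := hA.quadForm_nonneg x
  rw [← lintegral_map (f := fun s : ℝ => ENNReal.ofReal (Real.exp (t * s)))
    (g := fun y => @inner ℝ _ _ x y) (by fun_prop) (by fun_prop), h x,
    ← ofReal_integral_eq_lintegral_ofReal (integrable_exp_mul_gaussianReal t)
      (Filter.Eventually.of_forall fun _ => (Real.exp_pos _).le)]
  have := congrFun (mgf_id_gaussianReal (μ := @inner ℝ _ _ x (0 : EuclideanSpace ℝ (Fin d)))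
    (v := Real.toNNReal (quadForm A x))) t
  simp only [mgf, id] at this
  rw [this, Real.coe_toNNReal _ hq]
  congr 2
  simp
  ring

/-- Conditioning on the first of two independent vectors, the second being centered Gaussian. -/
lemma integral_exp_inner_eq_integral_exp_quadForm {d : ℕ} {Ω : Type*} [MeasurableSpace Ω]
    {P : Measure Ω} [IsProbabilityMeasure P] {S : Matrix (Fin d) (Fin d) ℝ} (hS : S.PosSemidef)
    {X Y : Ω → EuclideanSpace ℝ (Fin d)} (hX : Measurable X) (hY : Measurable Y)
    (hXY : IndepFun X Y P) (hlawY : IsGaussianVec (P.map Y) 0 S) (t : ℝ) :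
    ∫ ω, Real.exp (t * @inner ℝ _ _ (X ω) (Y ω)) ∂P =
      ∫ x, Real.exp (t ^ 2 / 2 * quadForm S x) ∂(P.map X) := by
  have hprod := (indepFun_iff_map_prod_eq_prod_map_map hX.aemeasurable hY.aemeasurable).1 hXY
  have := hlawY.1
  have := Measure.isProbabilityMeasure_map (μ := P) hX.aemeasurable
  rw [integral_eq_lintegral_of_nonneg_ae (Filter.Eventually.of_forall fun _ => (Real.exp_pos _).le)
      (by fun_prop),
    integral_eq_lintegral_of_nonneg_ae (Filter.Eventually.of_forall fun _ => (Real.exp_pos _).le)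
      (by unfold quadForm; fun_prop)]
  congr 1
  simp_rw [← hlawY.lintegral_exp_inner hS]
  rw [← lintegral_prod (fun p : EuclideanSpace ℝ (Fin d) × EuclideanSpace ℝ (Fin d) =>
    ENNReal.ofReal (Real.exp (t * @inner ℝ _ _ p.1 p.2))) (by fun_prop), ← hprod,
    lintegral_map (by fun_prop) (by fun_prop)]

/-- The Laplace transform of the square of a standard Gaussian variable. -/
lemma integral_exp_mul_sq_gaussianReal {a : ℝ} :
    ∫ x, Real.exp (a / 2 * x ^ 2) ∂(gaussianReal 0 1) = √(1 / (1 - a)) := by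
  rw [integral_gaussianReal_eq_integral_smul one_ne_zero]
  have h : ∀ x : ℝ, gaussianPDFReal 0 1 x • Real.exp (a / 2 * x ^ 2) =
      (√(2 * Real.pi))⁻¹ * Real.exp (-((1 - a) / 2) * x ^ 2) := by
    intro x
    simp only [gaussianPDFReal, smul_eq_mul, mul_assoc, ← Real.exp_add]
    have hexp : -(x - 0) ^ 2 / (2 * ((1 : NNReal) : ℝ)) + a / 2 * x ^ 2 =
        -((1 - a) / 2) * x ^ 2 := by
      push_cast
      ring
    rw [hexp, NNReal.coe_one, mul_one]
  simp_rw [h]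
  rw [integral_const_mul, integral_gaussian, ← Real.sqrt_inv, ← Real.sqrt_mul (by positivity)]
  congr 1
  have := Real.pi_pos.ne'
  by_cases h1 : 1 - a = 0
  · simp [h1]
  · field_simp

lemma sqrt_one_div_one_sub_le_exp {a b : ℝ} (ha : 0 ≤ a) (hab : a ≤ b) (hb : b < 1) :
    √(1 / (1 - a)) ≤ Real.exp (a / (2 * (1 - b))) := by
  have h1 : 0 < 1 - a := by linarith
  have h2 : 0 < 1 - b := by linarith
  apply Real.sqrt_le_iff.2 ⟨(Real.exp_pos _).le, ?_⟩
  rw [← Real.exp_nat_mul]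
  calc 1 / (1 - a) = a / (1 - a) + 1 := by field_simp; ring
    _ ≤ a / (1 - b) + 1 := by gcongr
    _ ≤ Real.exp (a / (1 - b)) := Real.add_one_le_exp _
    _ = _ := by congr 1; push_cast; field_simp

lemma Matrix.IsHermitian.toEuclideanCLM_eigenvectorBasis {d : ℕ} {M : Matrix (Fin d) (Fin d) ℝ}
    (hM : M.IsHermitian) (i : Fin d) :
    Matrix.toEuclideanCLM (𝕜 := ℝ) M (hM.eigenvectorBasis i) =
      hM.eigenvalues i • hM.eigenvectorBasis i := by
  ext j
  simpa using congrFun (hM.mulVec_eigenvectorBasis i) j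

/-- The Laplace transform of a quadratic form of a standard Gaussian vector, as a product over the eigenvalues. -/
lemma integral_exp_quadForm_stdGaussian {d : ℕ} {M : Matrix (Fin d) (Fin d) ℝ}
    (hM : M.IsHermitian) (c : ℝ) :
    ∫ x, Real.exp (c / 2 * quadForm M x) ∂(stdGaussian (EuclideanSpace ℝ (Fin d))) =
      ∏ i, √(1 / (1 - c * hM.eigenvalues i)) := by
  have hquad : ∀ z : Fin d → ℝ, quadForm M (∑ i, z i • hM.eigenvectorBasis i) =
      ∑ i, hM.eigenvalues i * z i ^ 2 := by
    intro z
    simp only [quadForm, map_sum, map_smul, hM.toEuclideanCLM_eigenvectorBasis, smul_smul]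
    rw [hM.eigenvectorBasis.orthonormal.inner_sum]
    refine Finset.sum_congr rfl fun i _ => ?_
    simp
    ring
  rw [stdGaussian_eq_map_pi_orthonormalBasis hM.eigenvectorBasis,
    integral_map (Measurable.aemeasurable (by fun_prop)) (by unfold quadForm; fun_prop)]
  simp_rw [hquad, Finset.mul_sum, Real.exp_sum]
  rw [integral_fintype_prod_eq_prod
    (f := fun i (s : ℝ) => Real.exp (c / 2 * (hM.eigenvalues i * s ^ 2)))]
  refine Finset.prod_congr rfl fun i _ => ?_
  rw [← integral_exp_mul_sq_gaussianReal]
  congr with x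
  ring_nf

lemma quadForm_le {d : ℕ} (A : Matrix (Fin d) (Fin d) ℝ) (u : EuclideanSpace ℝ (Fin d)) :
    quadForm A u ≤ opNorm A * ‖u‖ ^ 2 := by
  calc quadForm A u ≤ ‖u‖ * ‖Matrix.toEuclideanCLM (𝕜 := ℝ) A u‖ := real_inner_le_norm _ _
    _ ≤ ‖u‖ * (opNorm A * ‖u‖) := by
      gcongr
      exact ContinuousLinearMap.le_opNorm _ _
    _ = _ := by ring

lemma Matrix.IsHermitian.eigenvalues_le_of_quadForm_le {d : ℕ} {M : Matrix (Fin d) (Fin d) ℝ}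
    (hM : M.IsHermitian) {k : ℝ} (h : ∀ u, quadForm M u ≤ k * ‖u‖ ^ 2) (i : Fin d) :
    hM.eigenvalues i ≤ k := by
  simpa [quadForm, hM.toEuclideanCLM_eigenvectorBasis, inner_smul_right] using
    h (hM.eigenvectorBasis i)

/-- A quadratic form composed with a self-adjoint matrix. -/
lemma quadForm_toEuclideanCLM {d : ℕ} {R : Matrix (Fin d) (Fin d) ℝ} (hR : IsSelfAdjoint R)
    (A : Matrix (Fin d) (Fin d) ℝ) (u : EuclideanSpace ℝ (Fin d)) :
    quadForm A (Matrix.toEuclideanCLM (𝕜 := ℝ) R u) = quadForm (R * A * R) u := by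
  have h : IsSelfAdjoint (Matrix.toEuclideanCLM (𝕜 := ℝ) R) := hR.map _
  simp only [quadForm, map_mul, mul_apply_eq_comp]
  rw [← ContinuousLinearMap.adjoint_inner_right, h.adjoint_eq]

open scoped MatrixOrder in
/-- An upper bound for the Laplace transform of a positive semidefinite quadratic form of a centered
Gaussian vector. -/
lemma integral_exp_quadForm_multivariateGaussian_le {d : ℕ} {A S : Matrix (Fin d) (Fin d) ℝ}
    (hA : A.PosSemidef) (hS : S.PosSemidef) {c : ℝ} (hc : 0 ≤ c)
    (hlt : c * (opNorm S * opNorm A) < 1) :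
    ∫ x, Real.exp (c / 2 * quadForm S x) ∂(multivariateGaussian 0 A) ≤
      Real.exp (c * (S * A).trace / (2 * (1 - c * (opNorm S * opNorm A)))) := by
  set R := CFC.sqrt A with hRdef
  have hR : IsSelfAdjoint R := (CFC.sqrt_nonneg A).isSelfAdjoint
  have hRR : R * R = A := CFC.sqrt_mul_sqrt_self A hA.nonneg
  have hM : (R * S * R).PosSemidef := by
    have h := hS.mul_mul_conjTranspose_same R
    rwa [← Matrix.star_eq_conjTranspose, hR.star_eq] at h
  have htrace : (S * A).trace = ∑ i, hM.isHermitian.eigenvalues i := by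
    have := hM.isHermitian.trace_eq_sum_eigenvalues
    rw [← hRR, ← mul_assoc, Matrix.trace_mul_comm, ← mul_assoc]
    simpa using this
  have hle : ∀ i, hM.isHermitian.eigenvalues i ≤ opNorm S * opNorm A := by
    refine hM.isHermitian.eigenvalues_le_of_quadForm_le fun u => ?_
    have hnorm : ‖Matrix.toEuclideanCLM (𝕜 := ℝ) R u‖ ^ 2 = quadForm A u := by
      have := quadForm_toEuclideanCLM hR 1 u
      rw [mul_one, hRR] at this
      rw [← this]
      simp [quadForm]
    rw [← quadForm_toEuclideanCLM hR, mul_assoc]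
    refine (quadForm_le S _).trans ?_
    rw [hnorm]
    gcongr
    · exact norm_nonneg _
    · exact quadForm_le A u
  rw [multivariateGaussian, integral_map (by fun_prop) (by unfold quadForm; fun_prop)]
  simp_rw [zero_add, ← hRdef, quadForm_toEuclideanCLM hR]
  rw [integral_exp_quadForm_stdGaussian hM.isHermitian, htrace, Finset.mul_sum, Finset.sum_div,
    Real.exp_sum]
  refine Finset.prod_le_prod (fun _ _ => Real.sqrt_nonneg _) fun i _ => ?_
  exact sqrt_one_div_one_sub_le_exp (mul_nonneg hc (hM.eigenvalues_nonneg i))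
    (mul_le_mul_of_nonneg_left (hle i) hc) hlt

open scoped MatrixOrder in
lemma Matrix.PosSemidef.trace_mul_nonneg {d : ℕ} {A S : Matrix (Fin d) (Fin d) ℝ}
    (hS : S.PosSemidef) (hA : A.PosSemidef) : 0 ≤ (S * A).trace := by
  have hR : IsSelfAdjoint (CFC.sqrt A) := (CFC.sqrt_nonneg A).isSelfAdjoint
  have h := (hS.mul_mul_conjTranspose_same (CFC.sqrt A)).trace_nonneg
  rwa [← Matrix.star_eq_conjTranspose, hR.star_eq, Matrix.trace_mul_comm, ← mul_assoc,
    Matrix.trace_mul_comm, CFC.sqrt_mul_sqrt_self A hA.nonneg] at h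

/-- Laplace transform bound for the inner product of two independent centered
Gaussian vectors. -/
theorem stmt2 {d : ℕ} {Ω : Type*} [MeasurableSpace Ω] (P : Measure Ω)
    [IsProbabilityMeasure P]
    (Sig S : Matrix (Fin d) (Fin d) ℝ) (hSig : Sig.PosSemidef) (hS : S.PosSemidef)
    (X Y : Ω → EuclideanSpace ℝ (Fin d)) (hX : Measurable X) (hY : Measurable Y)
    (hXY : IndepFun X Y P)
    (hlawX : IsGaussianVec (P.map X) 0 Sig) (hlawY : IsGaussianVec (P.map Y) 0 S)
    (t : ℝ) (ht0 : 0 ≤ t) (ht : t < (opNorm S * opNorm Sig) ^ (-(1:ℝ)/2)) :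
    Real.log (∫ ω, Real.exp (t * @inner ℝ _ _ (X ω) (Y ω)) ∂P) ≤
      t ^ 2 * (S * Sig).trace / (2 * (1 - t * Real.sqrt (opNorm S * opNorm Sig))) := by
  have hk0 : 0 ≤ opNorm S * opNorm Sig := mul_nonneg (norm_nonneg _) (norm_nonneg _)
  have htr : 0 ≤ (S * Sig).trace := hS.trace_mul_nonneg hSig
  set k := opNorm S * opNorm Sig
  have hk : 0 < k := by
    rcases hk0.eq_or_lt with h | h
    · rw [← h, Real.zero_rpow (by norm_num)] at ht
      exact absurd ht ht0.not_gt
    · exact h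
  have hts : t * √k < 1 := by
    rwa [neg_div, Real.rpow_neg hk0, ← Real.sqrt_eq_rpow, ← one_div,
      lt_div_iff₀ (Real.sqrt_pos.2 hk)] at ht
  have hts0 : 0 ≤ t * √k := by positivity
  have hle : t ^ 2 * k ≤ t * √k := by
    have : t ^ 2 * k = (t * √k) ^ 2 := by rw [mul_pow, Real.sq_sqrt hk0]
    nlinarith
  rw [integral_exp_inner_eq_integral_exp_quadForm hS hX hY hXY hlawY,
    hlawX.eq_multivariateGaussian hSig]
  have hmain := integral_exp_quadForm_multivariateGaussian_le hSig hS (sq_nonneg t)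
    (hle.trans_lt hts)
  have hnn : 0 ≤ ∫ x, Real.exp (t ^ 2 / 2 * quadForm S x) ∂(multivariateGaussian 0 Sig) :=
    integral_nonneg fun _ => (Real.exp_pos _).le
  have hden : 0 < 1 - t * √k := by linarith
  rcases hnn.eq_or_lt with h | h
  · rw [← h, Real.log_zero]
    positivity
  · refine ((Real.log_le_iff_le_exp h).2 hmain).trans ?_
    gcongr
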